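/- Let n ≥ 1 and let ψ₀, α, β ∈ ℂⁿ be unit vectors. Suppose U is a unitary operator on ℂⁿ ⊗ ℂⁿ such that U(α ⊗ ψ₀) = α ⊗ α and U(β ⊗ ψ₀) = β ⊗ β. Then ⟨α, β⟩ = ⟨α, β⟩², and hence ⟨α, β⟩ = 0 or ⟨α, β⟩ = 1: any two states that can both be cloned by a single unitary device are either orthogonal or identical. -/

import Mathlib

open scoped ComplexOrder

noncomputable section

/-- The standard inner product on `ℂ^ι`, conjugate-linear in the first argument. -/
def inn {ι : Type*} [Fintype ι] (x y : ι → ℂ) : ℂ :=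
  ∑ i, (starRingEnd ℂ) (x i) * y i

/-- The tensor product of two vectors, with coordinates indexed by pairs. -/
def tens {m n : ℕ} (x : Fin m → ℂ) (y : Fin n → ℂ) : Fin m × Fin n → ℂ :=
  fun p => x p.1 * y p.2

open scoped Matrix

theorem inn_eq_star_dotProduct {ι : Type*} [Fintype ι] (x y : ι → ℂ) :
    inn x y = star x ⬝ᵥ y :=
  rfl

theorem inn_tens_tens {m n : ℕ} (a c : Fin m → ℂ) (b d : Fin n → ℂ) :
    inn (tens a b) (tens c d) = inn a c * inn b d := by
  simp only [inn, tens, map_mul, mul_mul_mul_comm, Fintype.sum_prod_type, Fintype.sum_mul_sum]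

theorem inn_mulVec_right {ι κ : Type*} [Fintype ι] [Fintype κ] (A : Matrix κ ι ℂ)
    (x : κ → ℂ) (y : ι → ℂ) : inn x (A *ᵥ y) = inn (Aᴴ *ᵥ x) y := by
  rw [inn_eq_star_dotProduct, inn_eq_star_dotProduct, Matrix.star_mulVec,
    Matrix.conjTranspose_conjTranspose, Matrix.dotProduct_mulVec]

theorem inn_mulVec_mulVec_of_conjTranspose_mul_self_eq_one {ι κ : Type*} [Fintype ι] [Fintype κ]
    [DecidableEq ι] {V : Matrix κ ι ℂ} (hV : Vᴴ * V = 1) (x y : ι → ℂ) :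
    inn (V *ᵥ x) (V *ᵥ y) = inn x y := by
  rw [inn_mulVec_right, Matrix.mulVec_mulVec, hV, Matrix.one_mulVec]

theorem stmt0_general {m n : ℕ} {ψ₀ : Fin m → ℂ} {α β : Fin n → ℂ} (hψ₀ : inn ψ₀ ψ₀ = 1)
    {V : Matrix (Fin n × Fin n) (Fin n × Fin m) ℂ} (hV : Vᴴ * V = 1)
    (hVα : V *ᵥ tens α ψ₀ = tens α α) (hVβ : V *ᵥ tens β ψ₀ = tens β β) :
    inn α β = inn α β ^ 2 ∧ (inn α β = 0 ∨ inn α β = 1) := by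
  have overlap_eq_sq : inn α β = inn α β ^ 2 :=
    calc
      inn α β = inn (tens α ψ₀) (tens β ψ₀) := by rw [inn_tens_tens, hψ₀, mul_one]
      _ = inn (V *ᵥ tens α ψ₀) (V *ᵥ tens β ψ₀) :=
        (inn_mulVec_mulVec_of_conjTranspose_mul_self_eq_one hV _ _).symm
      _ = inn (tens α α) (tens β β) := by rw [hVα, hVβ]
      _ = inn α β ^ 2 := by rw [inn_tens_tens, sq]
  have overlap_idempotent : IsIdempotentElem (inn α β) := by
    rw [IsIdempotentElem, ← sq, ← overlap_eq_sq]
  exact ⟨overlap_eq_sq, IsIdempotentElem.iff_eq_zero_or_one.mp overlap_idempotent⟩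

/-- Any two states that can both be cloned by a single unitary device satisfy
`⟨α,β⟩ = ⟨α,β⟩²`, hence are either orthogonal or identical. -/
theorem stmt0 (n : ℕ) (hn : 1 ≤ n) (ψ₀ α β : Fin n → ℂ)
    (hψ₀ : inn ψ₀ ψ₀ = 1) (hα : inn α α = 1) (hβ : inn β β = 1)
    (U : Matrix (Fin n × Fin n) (Fin n × Fin n) ℂ)
    (hU : U ∈ Matrix.unitaryGroup (Fin n × Fin n) ℂ)
    (hUα : U.mulVec (tens α ψ₀) = tens α α)
    (hUβ : U.mulVec (tens β ψ₀) = tens β β) :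
    inn α β = (inn α β) ^ 2 ∧ (inn α β = 0 ∨ inn α β = 1) :=
  stmt0_general hψ₀ (Matrix.mem_unitaryGroup_iff'.mp hU) hUα hUβ
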